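/- For an integer n ≥ 1, define f_n(x) = ∫_0^x sin(ns)/(2·sin(s)) ds (the integrand being extended continuously by the value n/2 at s = 0). Then f_4(2π/4) = 2/3, and for every integer n ≥ 4 one has f_n(2π/n) < f_{n+1}(2π/(n+1)); in particular the sequence (f_n(2π/n))_{n≥4} is strictly increasing. -/

import Mathlib

open Real intervalIntegral

noncomputable def fIntitem (n : ℕ) (x : ℝ) : ℝ :=
  ∫ s in (0:ℝ)..x, Real.sin (n * s) / (2 * Real.sin s)

/-!
Substituting `t = a * s` turns `∫ s in 0..2π/a, sin (a * s) / (2 * sin s)` into half the integral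
of `sin t` against the weight `1 / (a * sin (t / a))` over the fixed interval `[0, 2π]`.
For `a < b` the difference of the weights of `a` and `b` is strictly increasing in `t`, so it is
larger on `(π, 2π)`, where `sin` is negative, than on the translate `(0, π)`: its integral against
`sin` is negative. The difference increases because the weight of `a` has derivative
`-ψ (t / a) / t ^ 2`, where `ψ x = x ^ 2 * cos x / sin x ^ 2` is strictly decreasing on `(0, π)`.
-/

theorem two_mul_sin_mul_cos_lt {x : ℝ} (hx : 0 < x) :
    2 * sin x * cos x < x * (1 + cos x ^ 2) := by
  have hsin : |sin x| < x := by simpa [abs_of_pos hx] using abs_sin_lt_abs hx.ne'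
  calc 2 * sin x * cos x ≤ |2 * sin x * cos x| := le_abs_self _
    _ = |sin x| * (2 * |cos x|) := by rw [abs_mul, abs_mul, abs_two]; ring
    _ ≤ |sin x| * (1 + cos x ^ 2) := by
      gcongr
      nlinarith [sq_nonneg (1 - |cos x|), sq_abs (cos x)]
    _ < x * (1 + cos x ^ 2) := by gcongr

theorem hasDerivAt_sq_mul_cos_div_sin_sq {x : ℝ} (hx : sin x ≠ 0) :
    HasDerivAt (fun y ↦ y ^ 2 * cos y / sin y ^ 2)
      (x * (2 * sin x * cos x - x * (1 + cos x ^ 2)) / sin x ^ 3) x := by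
  refine ((((hasDerivAt_id' x).fun_pow 2).fun_mul (hasDerivAt_cos x)).fun_div
    ((hasDerivAt_sin x).fun_pow 2) (pow_ne_zero 2 hx)).congr_deriv ?_
  field_simp
  push_cast
  linear_combination (-x ^ 2 * sin x) * sin_sq_add_cos_sq x

theorem strictAntiOn_sq_mul_cos_div_sin_sq :
    StrictAntiOn (fun x ↦ x ^ 2 * cos x / sin x ^ 2) (Set.Ioo 0 π) := by
  have hderiv (x : ℝ) (hx : x ∈ Set.Ioo 0 π) :=
    hasDerivAt_sq_mul_cos_div_sin_sq (sin_pos_of_mem_Ioo hx).ne'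
  refine strictAntiOn_of_deriv_neg (convex_Ioo 0 π)
    (fun x hx ↦ (hderiv x hx).continuousAt.continuousWithinAt) fun x hx ↦ ?_
  rw [interior_Ioo] at hx
  rw [(hderiv x hx).deriv]
  exact div_neg_of_neg_of_pos
    (mul_neg_of_pos_of_neg hx.1 (sub_neg.2 (two_mul_sin_mul_cos_lt hx.1)))
    (pow_pos (sin_pos_of_mem_Ioo hx) 3)

theorem hasDerivAt_inv_mul_sin_div {a t : ℝ} (ht : t ≠ 0) (hs : sin (t / a) ≠ 0) :
    HasDerivAt (fun u ↦ (a * sin (u / a))⁻¹)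
      (-((t / a) ^ 2 * cos (t / a) / sin (t / a) ^ 2) / t ^ 2) t := by
  have ha : a ≠ 0 := by rintro rfl; simp at hs
  refine ((((hasDerivAt_id' t).div_const a).sin.const_mul a).fun_inv
    (mul_ne_zero ha hs)).congr_deriv ?_
  field_simp

theorem sin_div_pos {a t : ℝ} (ha : 0 < a) (ht : t ∈ Set.Ioo 0 (a * π)) : 0 < sin (t / a) :=
  sin_pos_of_pos_of_lt_pi (div_pos ht.1 ha) ((div_lt_iff₀' ha).2 ht.2)

theorem strictMonoOn_inv_mul_sin_div_sub {a b : ℝ} (ha : 0 < a) (hab : a < b) :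
    StrictMonoOn (fun t ↦ (a * sin (t / a))⁻¹ - (b * sin (t / b))⁻¹) (Set.Ioo 0 (a * π)) := by
  have hb : 0 < b := ha.trans hab
  have hsub : Set.Ioo 0 (a * π) ⊆ Set.Ioo 0 (b * π) :=
    Set.Ioo_subset_Ioo_right (by gcongr)
  have hderiv (t : ℝ) (ht : t ∈ Set.Ioo 0 (a * π)) :=
    (hasDerivAt_inv_mul_sin_div ht.1.ne' (sin_div_pos ha ht).ne').fun_sub
      (hasDerivAt_inv_mul_sin_div ht.1.ne' (sin_div_pos hb (hsub ht)).ne')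
  refine strictMonoOn_of_deriv_pos (convex_Ioo _ _)
    (fun t ht ↦ (hderiv t ht).continuousAt.continuousWithinAt) fun t ht ↦ ?_
  rw [interior_Ioo] at ht
  rw [(hderiv t ht).deriv, ← sub_div]
  have ht₀ : 0 < t := ht.1
  have hlt : t / b < t / a := by gcongr
  have hπ : t / a < π := (div_lt_iff₀' ha).2 ht.2
  have hψ := strictAntiOn_sq_mul_cos_div_sin_sq ⟨div_pos ht₀ hb, hlt.trans hπ⟩
    ⟨div_pos ht₀ ha, hπ⟩ hlt
  exact div_pos (by linarith) (pow_pos ht₀ 2)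

theorem integral_sin_mul_neg_of_strictMonoOn {h : ℝ → ℝ}
    (hint : IntervalIntegrable (fun t ↦ sin t * h t) MeasureTheory.volume 0 (2 * π))
    (hmono : StrictMonoOn h (Set.Ioo 0 (2 * π))) :
    ∫ t in 0..2 * π, sin t * h t < 0 := by
  have hπ := pi_pos
  have hleft : IntervalIntegrable (fun t ↦ sin t * h t) MeasureTheory.volume 0 π :=
    hint.mono_set (by
      rw [Set.uIcc_of_le hπ.le, Set.uIcc_of_le (by positivity)]
      exact Set.Icc_subset_Icc_right (by linarith))
  have hright : IntervalIntegrable (fun t ↦ sin t * h t) MeasureTheory.volume π (2 * π) :=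
    hleft.symm.trans hint
  have hshift : IntervalIntegrable (fun t ↦ sin t * h (t + π)) MeasureTheory.volume 0 π := by
    have := (hright.comp_add_right π).neg
    simpa [Pi.neg_def, sin_add_pi, two_mul] using this
  have hfold : ∫ t in 0..2 * π, sin t * h t = -∫ t in 0..π, sin t * (h (t + π) - h t) := by
    have htranslate : ∫ t in π..2 * π, sin t * h t = -∫ t in 0..π, sin t * h (t + π) := by
      have := integral_comp_add_right (a := 0) (b := π) (fun t ↦ sin t * h t) π
      simpa [sin_add_pi, two_mul] using this.symm
    rw [← integral_add_adjacent_intervals hleft hright, htranslate]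
    simp only [mul_sub]
    rw [integral_sub hshift hleft]
    ring
  rw [hfold, neg_lt_zero]
  refine intervalIntegral_pos_of_pos_on ?_ (fun t ht ↦ ?_) hπ
  · simpa only [mul_sub] using hshift.sub hleft
  · have hlt : h t < h (t + π) := hmono ⟨ht.1, by linarith [ht.2]⟩
      ⟨by linarith [ht.1], by linarith [ht.2]⟩ (by linarith)
    exact mul_pos (sin_pos_of_mem_Ioo ht) (sub_pos.2 hlt)

theorem abs_sin_le_mul_sin_div {a t : ℝ} (ha : 2 ≤ a) (ht : t ∈ Set.Icc 0 (2 * π)) :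
    |sin t| ≤ a * sin (t / a) := by
  have hhalf : t / 2 ∈ Set.Icc 0 π := ⟨by linarith [ht.1], by linarith [ht.2]⟩
  have hconcave : 2 / a * sin (t / 2) ≤ sin (t / a) := by
    have := strictConcaveOn_sin_Icc.concaveOn.2 ⟨le_rfl, pi_pos.le⟩ hhalf
      (sub_nonneg.2 ((div_le_one (by linarith)).2 ha)) (by positivity) (sub_add_cancel 1 (2 / a))
    simpa [div_mul_div_cancel₀'] using this
  have hsin : 0 ≤ 2 * sin (t / 2) := mul_nonneg zero_le_two (sin_nonneg_of_mem_Icc hhalf)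
  calc |sin t| = |2 * sin (t / 2) * cos (t / 2)| := by
        rw [← sin_two_mul, mul_div_cancel₀ t two_ne_zero]
    _ = 2 * sin (t / 2) * |cos (t / 2)| := by rw [abs_mul, abs_of_nonneg hsin]
    _ ≤ 2 * sin (t / 2) := mul_le_of_le_one_right hsin (abs_cos_le_one _)
    _ = a * (2 / a * sin (t / 2)) := by field_simp
    _ ≤ a * sin (t / a) := by gcongr

theorem intervalIntegrable_sin_mul_inv_mul_sin_div {a : ℝ} (ha : 2 ≤ a) :
    IntervalIntegrable (fun t ↦ sin t * (a * sin (t / a))⁻¹) MeasureTheory.volume 0 (2 * π) := by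
  have hbound (t : ℝ) (ht : t ∈ Set.Ioc 0 (2 * π)) : ‖sin t * (a * sin (t / a))⁻¹‖ ≤ 1 := by
    have hle := abs_sin_le_mul_sin_div ha (Set.Ioc_subset_Icc_self ht)
    have hnonneg := (abs_nonneg _).trans hle
    rw [← div_eq_mul_inv, norm_eq_abs, abs_div, abs_of_nonneg hnonneg]
    exact div_le_one_of_le₀ hle hnonneg
  refine (intervalIntegrable_const (c := (1 : ℝ))).mono_fun' (by fun_prop) ?_
  rw [Set.uIoc_of_le (by positivity)]
  exact MeasureTheory.ae_restrict_of_forall_mem measurableSet_Ioc hbound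

theorem integral_sin_mul_div_two_mul_sin (x : ℝ) {a : ℝ} (ha : a ≠ 0) :
    ∫ s in 0..x / a, sin (a * s) / (2 * sin s) =
      (∫ t in 0..x, sin t * (a * sin (t / a))⁻¹) / 2 := by
  have hsubst := inv_mul_integral_comp_div (a := 0) (b := x) (c := a)
    (f := fun s ↦ sin (a * s) / (2 * sin s))
  rw [zero_div] at hsubst
  rw [← hsubst, ← integral_const_mul, ← integral_div]
  refine integral_congr fun t _ ↦ ?_
  simp only [mul_div_cancel₀ t ha]
  field_simp

theorem fIntitem_four (x : ℝ) : fIntitem 4 x = 2 * sin x - 4 / 3 * sin x ^ 3 := by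
  have hsin : ∀ᵐ s : ℝ, sin s ≠ 0 := by
    filter_upwards [(Set.countable_range fun k : ℤ ↦ k * π).ae_notMem MeasureTheory.volume]
      with s hs using mt sin_eq_zero_iff.1 hs
  have hcongr : fIntitem 4 x = ∫ s in 0..x, (2 * cos s - 4 * (sin s ^ 2 * cos s)) := by
    refine integral_congr_ae ?_
    filter_upwards [hsin] with s hs _
    rw [show ((4 : ℕ) : ℝ) * s = 2 * (2 * s) by push_cast; ring, sin_two_mul, sin_two_mul,
      cos_two_mul, cos_sq']
    field_simp
    ring
  have hderiv (s : ℝ) : HasDerivAt (fun u ↦ 2 * sin u - 4 / 3 * sin u ^ 3)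
      (2 * cos s - 4 * (sin s ^ 2 * cos s)) s := by
    refine (((hasDerivAt_sin s).const_mul 2).fun_sub
      (((hasDerivAt_sin s).fun_pow 3).const_mul (4 / 3))).congr_deriv ?_
    push_cast
    ring
  rw [hcongr, integral_eq_sub_of_hasDerivAt (fun s _ ↦ hderiv s)
    (Continuous.intervalIntegrable (by fun_prop) 0 x)]
  simp

theorem fn_x2_increasing_general :
    fIntitem 4 (2 * π / 4) = 2 / 3 ∧
    StrictMonoOn (fun a : ℝ ↦ ∫ s in 0..2 * π / a, sin (a * s) / (2 * sin s)) (Set.Ici 2) := by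
  refine ⟨?_, fun a (ha : 2 ≤ a) b (hb : 2 ≤ b) hab ↦ ?_⟩
  · rw [fIntitem_four, show 2 * π / 4 = π / 2 by ring, sin_pi_div_two]
    norm_num
  · have hia := intervalIntegrable_sin_mul_inv_mul_sin_div ha
    have hib := intervalIntegrable_sin_mul_inv_mul_sin_div hb
    have hmono := (strictMonoOn_inv_mul_sin_div_sub (by linarith) hab).mono
      (Set.Ioo_subset_Ioo_right (by gcongr : 2 * π ≤ a * π))
    have hneg := integral_sin_mul_neg_of_strictMonoOn
      (by simpa only [mul_sub] using hia.sub hib) hmono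
    simp only [mul_sub] at hneg
    rw [integral_sub hia hib, sub_neg] at hneg
    simp only [integral_sin_mul_div_two_mul_sin (2 * π) (by linarith : a ≠ 0),
      integral_sin_mul_div_two_mul_sin (2 * π) (by linarith : b ≠ 0)]
    linarith

theorem fn_x2_increasing :
    fIntitem 4 (2 * Real.pi / 4) = 2 / 3 ∧
    ∀ n : ℕ, 4 ≤ n →
      fIntitem n (2 * Real.pi / n) < fIntitem (n + 1) (2 * Real.pi / (n + 1)) := by
  refine ⟨fn_x2_increasing_general.1, fun n hn ↦ ?_⟩
  have hn' : (2 : ℝ) ≤ n := by exact_mod_cast (by omega : 2 ≤ n)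
  simpa [fIntitem] using fn_x2_increasing_general.2 hn' (hn'.trans (by simp)) (lt_add_one (n : ℝ))
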